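/- Let N ≥ 2 be an integer and a ∈ (0,1) satisfy 1 + a^(2N−1) = N·(1+a)·a^(2N−2). Then 1 + a^(2N+1) > (N+1)·(1+a)·a^(2N). (Equivalently: if ∫_0^1 h_a(u)^(N−1) du = a^(2(N−1)), then ∫_0^1 h_a(u)^N du > a^(2N), by strict Lyapunov monotonicity of L^p means of the nondegenerate random variable h_a(U).) -/

import Mathlib

/-- Strict Lyapunov monotonicity step: if `a ∈ (0,1)` satisfies the zero-cost
two-draw equilibrium condition `1 + a^(2N−1) = N·(1+a)·a^(2N−2)`, then
`1 + a^(2N+1) > (N+1)·(1+a)·a^(2N)`. -/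
theorem stmt_8 (N : ℕ) (hN : 2 ≤ N)
    (a : ℝ) (ha : a ∈ Set.Ioo (0:ℝ) 1)
    (heq : 1 + a ^ (2 * N - 1) = (N : ℝ) * (1 + a) * a ^ (2 * N - 2)) :
    1 + a ^ (2 * N + 1) > ((N : ℝ) + 1) * (1 + a) * a ^ (2 * N) := by
  obtain ⟨n, rfl⟩ : ∃ n, N = n + 1 := ⟨N - 1, by omega⟩
  obtain ⟨h0, h1⟩ := ha
  have hn : (1:ℝ) ≤ n := by exact_mod_cast (by omega : 1 ≤ n)
  rw [show 2 * (n + 1) - 1 = 2 * n + 1 by omega, show 2 * (n + 1) - 2 = 2 * n by omega] at heq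
  rw [show 2 * (n + 1) + 1 = 2 * n + 3 by ring, show 2 * (n + 1) = 2 * n + 2 by ring]
  rw [pow_add] at heq
  rw [pow_add, pow_add]
  have hx : 0 < a ^ (2 * n) := by positivity
  have hB : 1 + (n:ℝ) * (a ^ 2 - 1) ≤ a ^ (2 * n) := by
    have := one_add_mul_le_pow (a := a ^ 2 - 1) (by nlinarith) n
    rw [pow_mul]
    simpa using this
  generalize a ^ (2 * n) = x at *
  push_cast at *
  have hE : x * ((n:ℝ) + 1 + n * a) = 1 := by linarith
  have key : 0 < ((n:ℝ) + 1) * (1 - a ^ 2) - a := by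
    by_contra! hc
    have h2 : (n:ℝ) + 1 - n * a ≤ (n + 1) * x := by nlinarith
    have h3 := mul_le_mul_of_nonneg_right h2 (by positivity : 0 ≤ (n:ℝ) + 1 + n * a)
    have h4 : (n:ℝ) ^ 2 * a ^ 2 ≤ n ^ 2 := by
      have : a ^ 2 ≤ 1 := by nlinarith
      nlinarith [sq_nonneg (n:ℝ)]
    nlinarith
  have : 0 < x * ((1 + a) * (((n:ℝ) + 1) * (1 - a ^ 2) - a)) := by positivity
  nlinarith
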